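/- arXiv:2001.11755 — 8 statements merged into one kernel-verified Lean document; each statement's English description precedes it below -/
import Mathlib

section
/- Let A be a real number with 3 ≤ A < 2^(5/3). Then for all positive real numbers x, y, z satisfying x + y + z = A and x·y·z = 1, the three strict triangle inequalities hold: x + y > z, y + z > x, and z + x > y. -/
theorem tri_aux (x y z : ℝ) (hx : 0 < x) (hy : 0 < y) (hz : 0 < z)
    (h : (x + y + z) ^ 3 < 32) (hprod : x * y * z = 1) : x + y > z := by
  by_contra hc
  have hc : x + y ≤ z := not_lt.mp hc
  have h1 : 4 ≤ (x + y) ^ 2 * z := by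
    have := mul_nonneg (sq_nonneg (x - y)) hz.le
    nlinarith
  obtain ⟨s, hs⟩ : ∃ s, s = x + y := ⟨_, rfl⟩
  have hs0 : 0 < s := by rw [hs]; positivity
  rw [← hs] at h h1 hc
  have h2 : 0 ≤ z ^ 2 + 4 * s * z - s ^ 2 := by nlinarith [mul_pos hs0 hz]
  have h3 := mul_nonneg (sub_nonneg.mpr hc) h2
  nlinarith

/-- For `3 ≤ A < 2^(5/3)` and positive reals `x, y, z` with
`x + y + z = A` and `x * y * z = 1`, the three strict triangle inequalities hold. -/
theorem triangle_inequalities_of_trace_lt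
    (A : ℝ) (hA3 : 3 ≤ A) (hA : A < (2 : ℝ) ^ ((5 : ℝ) / 3))
    (x y z : ℝ) (hx : 0 < x) (hy : 0 < y) (hz : 0 < z)
    (hsum : x + y + z = A) (hprod : x * y * z = 1) :
    x + y > z ∧ y + z > x ∧ z + x > y := by
  have h : A ^ 3 < 32 := by
    have h1 : ((2 : ℝ) ^ ((5 : ℝ) / 3)) ^ 3 = 32 := by
      rw [← Real.rpow_natCast, ← Real.rpow_mul (by norm_num)]
      norm_num
    rw [← h1]
    exact pow_lt_pow_left₀ hA (by linarith) (by norm_num)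
  rw [← hsum] at h
  refine ⟨tri_aux x y z hx hy hz h hprod, tri_aux y z x hy hz hx ?_ ?_,
    tri_aux z x y hz hx hy ?_ ?_⟩
  · rwa [show y + z + x = x + y + z by ring]
  · rw [← hprod]; ring
  · rwa [show z + x + y = x + y + z by ring]
  · rw [← hprod]; ring
end

section
/- Let Q be a 3×3 real symmetric positive definite matrix with det Q = 1 and trace Q < 2^(5/3). Then every eigenvalue λ of Q satisfies 2λ < trace Q. -/
theorem aux_three (a b c : ℝ) (ha : 0 < a) (hb : 0 < b) (hc : 0 < c) (h : a * b * c = 1)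
    (ht : (a + b + c) ^ 3 < 32) : 2 * a < a + b + c := by
  by_contra hn
  obtain ⟨s, hs⟩ : ∃ s, s = b + c := ⟨_, rfl⟩
  have hs0 : 0 < s := by linarith
  have has : 0 ≤ a - s := by linarith
  have h1 : 4 ≤ a * s ^ 2 := by
    have := mul_nonneg ha.le (sq_nonneg (b - c))
    subst hs
    nlinarith
  have h2 : 0 ≤ (a - s) * (a ^ 2 + 4 * a * s - s ^ 2) := by
    apply mul_nonneg has
    nlinarith [mul_pos ha hs0, mul_nonneg has hs0.le, sq_nonneg a]
  have h3 : a + b + c = a + s := by linarith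
  rw [h3] at ht
  nlinarith

/-- If `Q` is a real symmetric positive definite `3×3` matrix with
`det Q = 1` and `trace Q < 2^(5/3)`, then every eigenvalue `μ` of `Q` satisfies
`2 * μ < trace Q`. -/
theorem eigenvalue_lt_half_trace
    (Q : Matrix (Fin 3) (Fin 3) ℝ) (hsym : Q.IsSymm) (hpd : Q.PosDef)
    (hdet : Q.det = 1) (htr : Q.trace < (2 : ℝ) ^ ((5 : ℝ) / 3)) :
    ∀ μ : ℝ, μ ∈ spectrum ℝ Q → 2 * μ < Q.trace := by
  intro μ hμ
  have hH := hpd.1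
  rw [hH.spectrum_real_eq_range_eigenvalues] at hμ
  obtain ⟨i, rfl⟩ := hμ
  have hp : ∀ i, 0 < hH.eigenvalues i := hpd.eigenvalues_pos
  have hd := hH.det_eq_prod_eigenvalues
  have ht := hH.trace_eq_sum_eigenvalues
  simp only [Fin.prod_univ_three, Fin.sum_univ_three, RCLike.ofReal_real_eq_id, id] at hd ht
  rw [hdet] at hd
  have h32 : ((2 : ℝ) ^ ((5 : ℝ) / 3)) ^ 3 = 32 := by
    rw [← Real.rpow_natCast, ← Real.rpow_mul (by norm_num)]
    norm_num
  have h0 := hp 0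
  have h1 := hp 1
  have h2 := hp 2
  have ht3 : Q.trace ^ 3 < 32 := by
    rw [← h32]
    exact pow_lt_pow_left₀ htr (by rw [ht]; positivity) (by norm_num)
  rw [ht] at ht3 ⊢
  generalize hH.eigenvalues = e at *
  fin_cases i
  · exact aux_three _ _ _ h0 h1 h2 hd.symm ht3
  · have := aux_three (e 1) (e 0) (e 2) h1 h0 h2 (by linarith) (by convert ht3 using 2; ring)
    show 2 * e 1 < _
    linarith
  · have := aux_three (e 2) (e 0) (e 1) h2 h0 h1 (by linarith) (by convert ht3 using 2; ring)
    show 2 * e 2 < _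
    linarith
end

section
/- Let A be a real number with 3 ≤ A < 2^(5/3). Then there is a unique x₀ in the half-open interval (0, 1] satisfying 2·x₀ + x₀^(−2) = A, and moreover this x₀ satisfies x₀ > A/4. -/
theorem aux_eq_iff (A x : ℝ) (hx : 0 < x) :
    2 * x + x ^ (-2 : ℤ) = A ↔ 2 * x ^ 3 + 1 - A * x ^ 2 = 0 := by
  have h : x ^ (-2 : ℤ) = 1 / x ^ 2 := by
    rw [zpow_neg, one_div]; norm_cast
  have hx2 : x ^ 2 ≠ 0 := by positivity
  rw [h]
  constructor
  · intro h; rw [← h]; field_simp; ring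
  · intro h
    have : 1 = (A - 2 * x) * x ^ 2 := by linarith
    rw [this, mul_div_assoc, div_self hx2]; ring

/-- For `3 ≤ A < 2^(5/3)` there is a unique `x₀ ∈ (0, 1]` with
`2 x₀ + x₀⁻² = A`, and moreover this `x₀` satisfies `x₀ > A / 4`. -/
theorem unique_root_gt_quarter_trace
    (A : ℝ) (hA3 : 3 ≤ A) (hA : A < (2 : ℝ) ^ ((5 : ℝ) / 3)) :
    ∃ x₀ : ℝ, (x₀ ∈ Set.Ioc (0 : ℝ) 1 ∧ 2 * x₀ + x₀ ^ (-2 : ℤ) = A) ∧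
      A / 4 < x₀ ∧
      ∀ y : ℝ, y ∈ Set.Ioc (0 : ℝ) 1 → 2 * y + y ^ (-2 : ℤ) = A → y = x₀ := by
  have h32 : A ^ 3 < 32 := by
    have h1 : A ^ 3 < ((2 : ℝ) ^ ((5 : ℝ) / 3)) ^ 3 :=
      pow_lt_pow_left₀ hA (by linarith) (by norm_num)
    have h2 : ((2 : ℝ) ^ ((5 : ℝ) / 3)) ^ 3 = 32 := by
      rw [← Real.rpow_natCast, ← Real.rpow_mul (by norm_num)]
      have : (5 : ℝ) / 3 * ((3 : ℕ) : ℝ) = ((5 : ℕ) : ℝ) := by norm_num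
      rw [this, Real.rpow_natCast]; norm_num
    linarith
  have hA4 : A ≤ 4 := by
    by_contra! h
    have : (4 : ℝ) ^ 3 < A ^ 3 := pow_lt_pow_left₀ h (by norm_num) (by norm_num)
    linarith
  have hc : ContinuousOn (fun x : ℝ => 2 * x ^ 3 + 1 - A * x ^ 2) (Set.Icc (A / 4) 1) := by
    fun_prop
  obtain ⟨x, ⟨hx1, hx2⟩, hx⟩ := intermediate_value_Icc' (by linarith : A / 4 ≤ 1) hc
    (show (0 : ℝ) ∈ Set.Icc _ _ from ⟨by norm_num; linarith, by ring_nf; linarith⟩)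
  have hx : 2 * x ^ 3 + 1 - A * x ^ 2 = 0 := hx
  have hx0 : 0 < x := by linarith
  refine ⟨x, ⟨⟨hx0, hx2⟩, (aux_eq_iff A x hx0).2 hx⟩, ?_, ?_⟩
  · refine lt_of_le_of_ne hx1 ?_
    intro h
    rw [← h] at hx
    ring_nf at hx
    linarith
  · rintro y ⟨hy0, hy1⟩ hy
    rw [aux_eq_iff A y hy0] at hy
    by_contra hne
    have hsub : (y - x) * (2 * (x ^ 2 * y ^ 2) - (x + y)) = 0 := by
      linear_combination x ^ 2 * hy - y ^ 2 * hx
    have h0 := (mul_eq_zero.1 hsub).resolve_left (sub_ne_zero.2 hne)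
    have hp : 0 < x * y := by positivity
    have hp1 : x * y ≤ 1 := by nlinarith
    have h1 : x ^ 2 * y ^ 2 ≤ x * y := by nlinarith
    have h2 : 0 < (y - x) ^ 2 := by
      have := sub_ne_zero.2 hne
      positivity
    nlinarith
end

section
/- Fix a real number a > 0 and define v_a : ℝ → ℝ by v_a(x) = 32a / (32 − a²x²). Then v_a(0) = a, the derivative of v_a at 0 is 0, and for every x with 0 < x < 4√2/a, the function v_a satisfies the ordinary differential equation v_a''(x) + (3/x)·v_a'(x) = (1/4)·v_a(x)³. -/
lemma aux_den (a y : ℝ) :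
    HasDerivAt (fun x : ℝ => 32 - a ^ 2 * x ^ 2) (-(2 * a ^ 2 * y)) y := by
  have h := (((hasDerivAt_id y).pow 2).const_mul (a ^ 2)).const_sub 32
  refine (h.congr_deriv ?_)
  simp
  ring

lemma aux_d1 (a y : ℝ) (h : 32 - a ^ 2 * y ^ 2 ≠ 0) :
    HasDerivAt (fun x : ℝ => 32 * a / (32 - a ^ 2 * x ^ 2))
      (64 * a ^ 3 * y / (32 - a ^ 2 * y ^ 2) ^ 2) y := by
  refine ((hasDerivAt_const y (32 * a)).div (aux_den a y) h).congr_deriv ?_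
  congr 1
  ring

lemma aux_d2 (a y : ℝ) (h : 32 - a ^ 2 * y ^ 2 ≠ 0) :
    HasDerivAt (fun x : ℝ => 64 * a ^ 3 * x / (32 - a ^ 2 * x ^ 2) ^ 2)
      (64 * a ^ 3 / (32 - a ^ 2 * y ^ 2) ^ 2
        + 256 * a ^ 5 * y ^ 2 / (32 - a ^ 2 * y ^ 2) ^ 3) y := by
  refine (((hasDerivAt_id y).const_mul (64 * a ^ 3)).div ((aux_den a y).pow 2)
    (pow_ne_zero 2 h)).congr_deriv ?_
  simp only [id, Pi.pow_apply]
  field_simp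
  push_cast
  ring

/-- The function `v_a (x) = 32 a / (32 - a² x²)` satisfies `v_a 0 = a`,
`v_a' 0 = 0`, and the ODE `v_a'' + (3/x) v_a' = (1/4) v_a³` for `0 < x < 4√2 / a`. -/
theorem comparison_function_solves_ode (a : ℝ) (ha : 0 < a) :
    (fun x : ℝ => 32 * a / (32 - a ^ 2 * x ^ 2)) 0 = a ∧
    deriv (fun x : ℝ => 32 * a / (32 - a ^ 2 * x ^ 2)) 0 = 0 ∧
    ∀ x : ℝ, 0 < x → x < 4 * Real.sqrt 2 / a →
      deriv (deriv (fun x : ℝ => 32 * a / (32 - a ^ 2 * x ^ 2))) x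
        + (3 / x) * deriv (fun x : ℝ => 32 * a / (32 - a ^ 2 * x ^ 2)) x
      = (1 / 4) * ((fun x : ℝ => 32 * a / (32 - a ^ 2 * x ^ 2)) x) ^ 3 := by
  refine ⟨by simp, ?_, ?_⟩
  · rw [(aux_d1 a 0 (by norm_num)).deriv]
    simp
  · intro x hx hxa
    have h1 : x * a < 4 * Real.sqrt 2 := (lt_div_iff₀ ha).1 hxa
    have h2 : 0 < x * a := mul_pos hx ha
    have h3 : Real.sqrt 2 ^ 2 = 2 := Real.sq_sqrt (by norm_num)
    have hD : 32 - a ^ 2 * x ^ 2 ≠ 0 := by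
      have : 0 < 32 - a ^ 2 * x ^ 2 := by nlinarith
      exact this.ne'
    have hev : deriv (fun x : ℝ => 32 * a / (32 - a ^ 2 * x ^ 2)) =ᶠ[nhds x]
        fun x : ℝ => 64 * a ^ 3 * x / (32 - a ^ 2 * x ^ 2) ^ 2 := by
      filter_upwards [(aux_den a x).continuousAt.eventually_ne hD] with y hy
      exact (aux_d1 a y hy).deriv
    rw [hev.deriv_eq, (aux_d2 a x hD).deriv, (aux_d1 a x hD).deriv]
    field_simp
    ring
end

section
/- Fix a real number a > 0 and define v_a : ℝ → ℝ by v_a(x) = 32a / (32 − a²x²). If v : ℝ → ℝ is twice continuously differentiable on [0, 4√2/a) with v(0) = a and v'(0) = 0, and v satisfies v''(x) + (3/x)·v'(x) = (1/4)·v(x)³ for all x with 0 < x < 4√2/a, then v(x) = v_a(x) for all x in [0, 4√2/a). -/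
/-- Uniqueness of the solution of the singular initial value problem
`v'' + (3/x) v' = (1/4) v³`, `v 0 = a`, `v' 0 = 0` on `[0, 4√2/a)`: any twice
continuously differentiable solution coincides with `v_a (x) = 32 a / (32 - a² x²)`. -/
theorem comparison_function_unique_solution (a : ℝ) (ha : 0 < a) (v : ℝ → ℝ)
    (hv : ContDiffOn ℝ 2 v (Set.Ico (0 : ℝ) (4 * Real.sqrt 2 / a)))
    (hv0 : v 0 = a) (hv'0 : deriv v 0 = 0)
    (hode : ∀ x : ℝ, 0 < x → x < 4 * Real.sqrt 2 / a →
      deriv (deriv v) x + (3 / x) * deriv v x = (1 / 4) * (v x) ^ 3) :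
    ∀ x ∈ Set.Ico (0 : ℝ) (4 * Real.sqrt 2 / a),
      v x = 32 * a / (32 - a ^ 2 * x ^ 2) := by
  have hD : ∀ x ∈ Set.Ico (0 : ℝ) (4 * Real.sqrt 2 / a), 0 < 32 - a ^ 2 * x ^ 2 := by
    intro x hx
    have h1 : x * a < 4 * Real.sqrt 2 := (lt_div_iff₀ ha).1 hx.2
    have h0 : 0 ≤ x * a := mul_nonneg hx.1 ha.le
    have h2 : Real.sqrt 2 ^ 2 = 2 := Real.sq_sqrt (by norm_num)
    nlinarith
  have hR : 0 < 4 * Real.sqrt 2 / a := by positivity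
  generalize 4 * Real.sqrt 2 / a = R at *
  set S := Set.Ico (0 : ℝ) R with hS
  have hU : UniqueDiffOn ℝ S := uniqueDiffOn_Ico 0 R
  set v1 := derivWithin v S with hv1
  set v2 := derivWithin v1 S with hv2
  have c1 : ContDiffOn ℝ 1 v1 S := hv.derivWithin hU (by norm_num)
  have c2 : ContinuousOn v2 S := c1.continuousOn_derivWithin hU (by norm_num)
  have nb : ∀ x, 0 < x → x < R → S ∈ nhds x := fun x h h' => Ico_mem_nhds h h'
  have d0 : ∀ x, 0 < x → x < R → HasDerivAt v (v1 x) x := by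
    intro x h h'
    exact ((hv.differentiableOn (by norm_num) x ⟨h.le, h'⟩).hasDerivWithinAt).hasDerivAt (nb x h h')
  have d1 : ∀ x, 0 < x → x < R → HasDerivAt v1 (v2 x) x := by
    intro x h h'
    exact ((c1.differentiableOn (by norm_num) x ⟨h.le, h'⟩).hasDerivWithinAt).hasDerivAt (nb x h h')
  have ode : ∀ x, 0 < x → x < R → v2 x + 3 / x * v1 x = 1 / 4 * v x ^ 3 := by
    intro x h h'
    have e : deriv v =ᶠ[nhds x] v1 := by
      filter_upwards [Ioo_mem_nhds h h'] with y hy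
      exact (d0 y hy.1 hy.2).deriv
    rw [← hode x h h', e.deriv_eq, (d1 x h h').deriv, (d0 x h h').deriv]
  have z : v1 0 = 0 := by
    have hc : ContinuousOn (fun x => x * v2 x + 3 * v1 x - x * (1 / 4 * v x ^ 3)) S := by
      have := hv.continuousOn
      have := c1.continuousOn
      fun_prop
    have t1 := (hc 0 ⟨le_rfl, hR⟩).mono_left
      (nhdsWithin_mono (0:ℝ) (Set.Ioo_subset_Ico_self : Set.Ioo (0:ℝ) R ⊆ S))
    have t2 : Filter.Tendsto (fun x => x * v2 x + 3 * v1 x - x * (1 / 4 * v x ^ 3))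
        (nhdsWithin 0 (Set.Ioo 0 R)) (nhds 0) := by
      refine tendsto_const_nhds.congr' ?_
      filter_upwards [self_mem_nhdsWithin] with x hx
      rw [← ode x hx.1 hx.2]
      have := hx.1.ne'
      field_simp
      ring
    have : (nhdsWithin (0:ℝ) (Set.Ioo 0 R)).NeBot := by
      rw [nhdsWithin_Ioo_eq_nhdsGT hR]; infer_instance
    have := tendsto_nhds_unique t1 t2
    simpa using this
  intro r hr
  have sub : Set.Icc 0 r ⊆ S := fun y hy => ⟨hy.1, hy.2.trans_lt hr.2⟩
  set u : ℝ → ℝ := fun x => 32 * a / (32 - a ^ 2 * x ^ 2) with hu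
  set u1 : ℝ → ℝ := fun x => 64 * a ^ 3 * x / (32 - a ^ 2 * x ^ 2) ^ 2 with hu1
  have hDd : ∀ x, HasDerivAt (fun x : ℝ => 32 - a ^ 2 * x ^ 2) (-(2 * a ^ 2 * x)) x := by
    intro x
    have := (((hasDerivAt_id x).pow 2).const_mul (a ^ 2)).const_sub 32
    refine HasDerivAt.congr_deriv this ?_
    simp; ring
  have e0 : ∀ x ∈ S, HasDerivAt u (u1 x) x := by
    intro x hx
    have := (hasDerivAt_const x (32 * a)).div (hDd x) (hD x hx).ne'
    refine HasDerivAt.congr_deriv this ?_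
    simp only [hu1]; congr 1; ring
  have e1 : ∀ x ∈ S, HasDerivAt u1 (64 * a ^ 3 / (32 - a ^ 2 * x ^ 2) ^ 2
      + 256 * a ^ 5 * x ^ 2 / (32 - a ^ 2 * x ^ 2) ^ 3) x := by
    intro x hx
    have h0 := (hD x hx).ne'
    have := ((hasDerivAt_id x).const_mul (64 * a ^ 3)).div ((hDd x).pow 2) (pow_ne_zero 2 h0)
    refine HasDerivAt.congr_deriv this ?_
    simp only [id, Pi.pow_apply]
    field_simp
    push_cast
    ring
  have cu : ContinuousOn u (Set.Icc 0 r) :=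
    fun x hx => (e0 x (sub hx)).continuousAt.continuousWithinAt
  have cu1 : ContinuousOn u1 (Set.Icc 0 r) :=
    fun x hx => (e1 x (sub hx)).continuousAt.continuousWithinAt
  have cv : ContinuousOn v (Set.Icc 0 r) := hv.continuousOn.mono sub
  have cv1 : ContinuousOn v1 (Set.Icc 0 r) := c1.continuousOn.mono sub
  obtain ⟨C, hC⟩ := isCompact_Icc.exists_bound_of_continuousOn
    (f := fun x => 1 + (v x ^ 2 + v x * u x + u x ^ 2) / 4) (s := Set.Icc 0 r) (by fun_prop)
  have key : AntitoneOn (fun x => Real.exp (-C * x) * ((v x - u x) ^ 2 + (v1 x - u1 x) ^ 2))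
      (Set.Icc 0 r) := by
    have hder : ∀ x ∈ Set.Ioo 0 r, HasDerivAt
        (fun x => Real.exp (-C * x) * ((v x - u x) ^ 2 + (v1 x - u1 x) ^ 2))
        (Real.exp (-C * x) * (-C * ((v x - u x) ^ 2 + (v1 x - u1 x) ^ 2)
          + 2 * (v x - u x) * (v1 x - u1 x) * (1 + (v x ^ 2 + v x * u x + u x ^ 2) / 4)
          - 6 / x * (v1 x - u1 x) ^ 2)) x := by
      intro x hx
      have hxR := hx.2.trans hr.2
      have hxS : x ∈ S := ⟨hx.1.le, hxR⟩
      have A := ((hasDerivAt_id x).const_mul (-C)).exp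
      have B := ((d0 x hx.1 hxR).sub (e0 x hxS)).pow 2
      have B' := ((d1 x hx.1 hxR).sub (e1 x hxS)).pow 2
      have := A.mul (B.add B')
      refine HasDerivAt.congr_deriv this ?_
      have o := ode x hx.1 hxR
      have o2 : 64 * a ^ 3 / (32 - a ^ 2 * x ^ 2) ^ 2
          + 256 * a ^ 5 * x ^ 2 / (32 - a ^ 2 * x ^ 2) ^ 3 = 1 / 4 * u x ^ 3 - 3 / x * u1 x := by
        have h0 := (hD x hxS).ne'
        have := hx.1.ne'
        simp only [hu, hu1]
        field_simp
        ring
      rw [o2, show v2 x = 1 / 4 * v x ^ 3 - 3 / x * v1 x by linarith]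
      simp only [id, Pi.pow_apply, Pi.sub_apply, Pi.add_apply]
      push_cast
      ring
    apply antitoneOn_of_deriv_nonpos (convex_Icc 0 r)
    · fun_prop
    · rw [interior_Icc]
      exact fun x hx => (hder x hx).differentiableAt.differentiableWithinAt
    · rw [interior_Icc]
      intro x hx
      rw [(hder x hx).deriv]
      apply mul_nonpos_of_nonneg_of_nonpos (Real.exp_pos _).le
      have hb := abs_le.1 (hC x ⟨hx.1.le, hx.2.le⟩)
      have h6 : 0 ≤ 6 / x * (v1 x - u1 x) ^ 2 := by
        have := hx.1
        positivity
      generalize 1 + (v x ^ 2 + v x * u x + u x ^ 2) / 4 = p at *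
      generalize v x - u x = d at *
      generalize v1 x - u1 x = e at *
      nlinarith [mul_nonneg (sub_nonneg.2 hb.2) (sq_nonneg (d + e)),
        mul_nonneg (neg_le_iff_add_nonneg.1 hb.1) (sq_nonneg (d - e))]
  have fin := key ⟨le_rfl, hr.1⟩ ⟨hr.1, le_rfl⟩ hr.1
  have hu0 : u 0 = a := by simp only [hu]; ring
  have hu10 : u1 0 = 0 := by simp [hu1]
  simp only [hv0, z, hu0, hu10] at fin
  have hE := Real.exp_pos (-C * r)
  have : (v r - u r) ^ 2 + (v1 r - u1 r) ^ 2 ≤ 0 := by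
    by_contra hcon
    have := mul_pos hE (not_le.1 hcon)
    norm_num at fin
    norm_num at this
    linarith
  have : v r - u r = 0 := by nlinarith [sq_nonneg (v r - u r), sq_nonneg (v1 r - u1 r)]
  exact sub_eq_zero.1 this
end

section
/- Let E be a finite-dimensional real inner product space and let f : E → ℝ be a twice continuously differentiable function with f(x) ≥ 0 for all x, satisfying f(x)·Δf(x) ≥ (1/2)·‖∇f(x)‖² + (1/2)·f(x)³ for all x ∈ E. Then Δf(x) ≥ 0 for all x ∈ E. -/
open scoped BigOperators

/-- The Laplacian of `f : E → ℝ` at `x`: the trace of the Hessian of `f` at `x`,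
computed with respect to an orthonormal basis of `E`. -/
noncomputable def laplacian {E : Type*} [NormedAddCommGroup E]
    [InnerProductSpace ℝ E] [FiniteDimensional ℝ E] (f : E → ℝ) (x : E) : ℝ :=
  ∑ i, iteratedFDeriv ℝ 2 f x
    ![(stdOrthonormalBasis ℝ E) i, (stdOrthonormalBasis ℝ E) i]

theorem second_deriv_nonneg_of_min {E : Type*} [NormedAddCommGroup E] [InnerProductSpace ℝ E]
    (f : E → ℝ) (hf : ContDiff ℝ 2 f) (p v : E) (hmin : ∀ x, f p ≤ f x) :
    0 ≤ iteratedFDeriv ℝ 2 f p ![v, v] := by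
  rw [iteratedFDeriv_two_apply]
  simp only [Matrix.cons_val_zero, Matrix.cons_val_one]
  have hline : ∀ t : ℝ, HasDerivAt (fun t : ℝ => p + t • v) v t := fun t => by
    simpa using ((hasDerivAt_id t).smul_const v).const_add p
  have hd : Differentiable ℝ f := hf.differentiable (by norm_num)
  have hd2 : Differentiable ℝ (fderiv ℝ f) :=
    (hf.fderiv_right (m := 1) (by norm_num)).differentiable (by norm_num)
  set g : ℝ → ℝ := fun t => f (p + t • v) with hg
  have h1 : ∀ t, HasDerivAt g (fderiv ℝ f (p + t • v) v) t := fun t =>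
    (hd (p + t • v)).hasFDerivAt.comp_hasDerivAt t (hline t)
  have hdg : deriv g = fun t => fderiv ℝ f (p + t • v) v := funext fun t => (h1 t).deriv
  have h2 : HasDerivAt (deriv g) (fderiv ℝ (fderiv ℝ f) p v v) 0 := by
    rw [hdg]
    have h3 := (hd2 (p + (0 : ℝ) • v)).hasFDerivAt.comp_hasDerivAt (0 : ℝ) (hline 0)
    have h4 := h3.clm_apply (hasDerivAt_const (0 : ℝ) v)
    simpa using h4
  have hmin0 : ∀ t, g 0 ≤ g t := fun t => by simpa [hg] using hmin (p + t • v)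
  by_contra hneg
  push Not at hneg
  have hlm : IsLocalMin g 0 := Filter.Eventually.of_forall hmin0
  have hmax : IsLocalMax g 0 := isLocalMax_of_deriv_deriv_neg (by rw [h2.deriv]; exact hneg)
    hlm.deriv_eq_zero (h1 0).continuousAt
  have hc : g =ᶠ[nhds 0] fun _ => g 0 := by
    filter_upwards [hmax] with t ht using le_antisymm ht (hmin0 t)
  have := hc.deriv.deriv_eq
  rw [h2.deriv] at this
  simp at this
  linarith

/-- If `f ≥ 0` is `C²` on a finite-dimensional real inner product space
and satisfies `f Δf ≥ (1/2) ‖∇f‖² + (1/2) f³` everywhere, then `Δf ≥ 0` everywhere. -/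
theorem laplacian_nonneg_of_differential_inequality
    {E : Type*} [NormedAddCommGroup E] [InnerProductSpace ℝ E]
    [FiniteDimensional ℝ E] (f : E → ℝ) (hf : ContDiff ℝ 2 f)
    (hpos : ∀ x, 0 ≤ f x)
    (hineq : ∀ x, f x * laplacian f x ≥
      (1 / 2) * ‖gradient f x‖ ^ 2 + (1 / 2) * f x ^ 3) :
    ∀ x, 0 ≤ laplacian f x := by
  intro x
  by_contra hneg
  push Not at hneg
  have h0 : f x = 0 := by
    by_contra hne
    have hp : 0 < f x := lt_of_le_of_ne (hpos x) (Ne.symm hne)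
    have := hineq x
    have h1 := mul_neg_of_pos_of_neg hp hneg
    have h2 : 0 < f x ^ 3 := by positivity
    have h3 := sq_nonneg ‖gradient f x‖
    linarith
  have : 0 ≤ laplacian f x := Finset.sum_nonneg fun i _ =>
    second_deriv_nonneg_of_min f hf x _ fun y => by rw [h0]; exact hpos y
  linarith
end

section
/- Let f : EuclideanSpace ℝ (Fin 4) → ℝ be a twice continuously differentiable function with f(x) ≥ 0 for all x, satisfying f(x)·Δf(x) ≥ (1/2)·‖∇f(x)‖² + (1/2)·f(x)³ for all x. Then f is identically zero. -/
open scoped BigOperators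

open Filter Topology

lemma aux_second_deriv {F F' : ℝ → ℝ} {F'' : ℝ} (h1 : ∀ t, HasDerivAt F (F' t) t)
    (h2 : HasDerivAt F' F'' 0) (hm : IsLocalMax F 0) : F' 0 = 0 ∧ F'' ≤ 0 := by
  have e1 : deriv F = F' := funext fun t => (h1 t).deriv
  have h0 : F' 0 = 0 := hm.hasDerivAt_eq_zero (h1 0)
  refine ⟨h0, ?_⟩
  by_contra hc
  push Not at hc
  have hmin : IsLocalMin F 0 := by
    apply isLocalMin_of_deriv_deriv_pos
    · rw [e1, h2.deriv]; exact hc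
    · rw [e1, h0]
    · exact (h1 0).continuousAt
  have hconst : F =ᶠ[𝓝 0] fun _ => F 0 := by
    filter_upwards [hm, hmin] with t a b
    exact le_antisymm a b
  have h3 := hconst.deriv.deriv.eq_of_nhds
  rw [e1, h2.deriv] at h3
  simp at h3
  linarith

lemma aux_dir {E : Type*} [NormedAddCommGroup E] [InnerProductSpace ℝ E]
    (f : E → ℝ) (hf : ContDiff ℝ 2 f) (p x e : E) (he : ‖e‖ = 1) (R : ℝ)
    (hφ : 0 < R ^ 2 - ‖x - p‖ ^ 2)
    (hm : IsLocalMax (fun y => f y * (R ^ 2 - ‖y - p‖ ^ 2) ^ 2) x) :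
    iteratedFDeriv ℝ 2 f x ![e, e] * (R ^ 2 - ‖x - p‖ ^ 2) ^ 2
      ≤ f x * (24 * (inner ℝ (x - p) e) ^ 2 + 4 * (R ^ 2 - ‖x - p‖ ^ 2)) := by
  rw [iteratedFDeriv_two_apply]
  simp only [Matrix.cons_val_zero, Matrix.cons_val_one]
  have hl : ∀ t : ℝ, HasDerivAt (fun t : ℝ => x + t • e) e t := fun t => by
    simpa using ((hasDerivAt_id t).smul_const e).const_add x
  have hg : ∀ t : ℝ, HasDerivAt (fun t : ℝ => f (x + t • e)) (fderiv ℝ f (x + t • e) e) t :=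
    fun t => ((hf.differentiable (by norm_num)) _).hasFDerivAt.comp_hasDerivAt t (hl t)
  have hf' : ContDiff ℝ 1 (fderiv ℝ f) := hf.fderiv_right (by norm_num)
  have hg' : HasDerivAt (fun t : ℝ => fderiv ℝ f (x + t • e) e)
      (fderiv ℝ (fderiv ℝ f) x e e) 0 := by
    have h := ((hf'.differentiable (by norm_num)) (x + (0:ℝ) • e)).hasFDerivAt.comp_hasDerivAt
      (0:ℝ) (hl 0)
    have h' := h.clm_apply (hasDerivAt_const (0:ℝ) e)
    simpa using h'
  set c := inner ℝ (x - p) e with hc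
  set A := R ^ 2 - ‖x - p‖ ^ 2 with hA
  have hexp : ∀ t : ℝ, R ^ 2 - ‖x + t • e - p‖ ^ 2 = A - 2 * t * c - t ^ 2 := fun t => by
    have : x + t • e - p = (x - p) + t • e := by abel
    rw [this, norm_add_sq_real, inner_smul_right, norm_smul, he, hA, ← hc]
    simp only [Real.norm_eq_abs, mul_one, sq_abs]
    ring
  have hφd : ∀ t : ℝ, HasDerivAt (fun t : ℝ => A - 2 * t * c - t ^ 2) (- 2 * c - 2 * t) t :=
    fun t => by
      have h := ((((hasDerivAt_id t).const_mul 2).mul_const c).const_sub A).sub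
        ((hasDerivAt_id t).pow 2)
      refine h.congr_deriv ?_
      simp
  have hφd' : HasDerivAt (fun t : ℝ => - 2 * c - 2 * t) (-2) 0 := by
    have h := ((hasDerivAt_id (0:ℝ)).const_mul 2).const_sub (-2 * c)
    refine h.congr_deriv ?_
    simp
  have hm' : IsLocalMax (fun t : ℝ => f (x + t • e) * (A - 2 * t * c - t ^ 2) ^ 2) 0 := by
    have hcont : Tendsto (fun t : ℝ => x + t • e) (𝓝 0) (𝓝 x) := by
      have := (hl 0).continuousAt.tendsto
      simpa using this
    have := hcont.eventually hm
    filter_upwards [this] with t ht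
    rw [← hexp t]
    simpa [hA] using ht
  have hF1 : ∀ t : ℝ, HasDerivAt (fun t : ℝ => f (x + t • e) * (A - 2 * t * c - t ^ 2) ^ 2)
      (fderiv ℝ f (x + t • e) e * (A - 2 * t * c - t ^ 2) ^ 2 +
        f (x + t • e) * (2 * (A - 2 * t * c - t ^ 2) * (- 2 * c - 2 * t))) t := fun t => by
    refine ((hg t).mul ((hφd t).pow 2)).congr_deriv ?_
    simp
  have key := aux_second_deriv hF1
    ((hg'.mul ((hφd 0).pow 2)).add ((hg 0).mul
      (((hφd 0).const_mul (2:ℝ)).mul hφd'))) hm'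
  obtain ⟨k1, k2⟩ := key
  simp at k1 k2
  generalize fderiv ℝ (fderiv ℝ f) x e e = g2 at *
  generalize fderiv ℝ f x e = g1 at *
  have k3 : g1 * A = 4 * (f x * c) := by
    have : A * (g1 * A - 4 * (f x * c)) = 0 := by linarith
    rcases mul_eq_zero.1 this with h | h
    · exact absurd h hφ.ne'
    · linarith
  have k4 : g1 * A * c = 4 * (f x * c) * c := by rw [k3]
  nlinarith

theorem liouville_euclidean_four
    (f : EuclideanSpace ℝ (Fin 4) → ℝ) (hf : ContDiff ℝ 2 f)
    (hpos : ∀ x, 0 ≤ f x)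
    (hineq : ∀ x, f x * laplacian f x ≥
      (1 / 2) * ‖gradient f x‖ ^ 2 + (1 / 2) * f x ^ 3) :
    ∀ x, f x = 0 := by
  intro p
  have main : ∀ R : ℝ, 0 < R → f p * R ^ 2 ≤ 48 := by
    intro R hR
    by_contra hcon
    push Not at hcon
    have hcF : Continuous (fun y => f y * (R ^ 2 - ‖y - p‖ ^ 2) ^ 2) := by
      have := hf.continuous
      fun_prop
    obtain ⟨x, hx, hmax⟩ := (isCompact_closedBall p R).exists_isMaxOn
      ⟨p, Metric.mem_closedBall_self hR.le⟩ hcF.continuousOn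
    have hp := hmax (Metric.mem_closedBall_self hR.le)
    simp only [Set.mem_ofPred_eq, sub_self, norm_zero] at hp
    have hxR : ‖x - p‖ ≤ R := by simpa [dist_eq_norm] using hx
    have hbig : 48 * R ^ 2 < f x * (R ^ 2 - ‖x - p‖ ^ 2) ^ 2 := by nlinarith [sq_pos_of_pos hR]
    have hxR' : ‖x - p‖ < R := by
      rcases hxR.lt_or_eq with h | h
      · exact h
      · rw [h] at hbig
        nlinarith [sq_pos_of_pos hR]
    have hφ : 0 < R ^ 2 - ‖x - p‖ ^ 2 := by nlinarith [norm_nonneg (x - p)]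
    have hloc : IsLocalMax (fun y => f y * (R ^ 2 - ‖y - p‖ ^ 2) ^ 2) x := by
      apply hmax.isLocalMax
      apply Filter.mem_of_superset (Metric.isOpen_ball.mem_nhds _) Metric.ball_subset_closedBall
      simpa [dist_eq_norm] using hxR'
    have hfx : 0 < f x := by
      rcases (hpos x).lt_or_eq with h | h
      · exact h
      · rw [← h] at hbig
        nlinarith [sq_pos_of_pos hR]
    have hsum := Finset.sum_le_sum (s := Finset.univ) fun i _ =>
      aux_dir f hf p x (stdOrthonormalBasis ℝ (EuclideanSpace ℝ (Fin 4)) i)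
        ((stdOrthonormalBasis ℝ (EuclideanSpace ℝ (Fin 4))).orthonormal.1 i) R hφ hloc
    rw [← Finset.sum_mul, ← Finset.mul_sum, Finset.sum_add_distrib, ← Finset.mul_sum,
      OrthonormalBasis.sum_sq_inner_left] at hsum
    simp only [Finset.sum_const, Finset.card_univ, Fintype.card_fin, finrank_euclideanSpace,
      nsmul_eq_mul] at hsum
    change laplacian f x * _ ≤ _ at hsum
    have h1 := hineq x
    have h2 : f x ^ 2 ≤ 2 * laplacian f x := by
      have : 0 ≤ f x * (2 * laplacian f x - f x ^ 2) := by nlinarith [sq_nonneg ‖gradient f x‖]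
      have := nonneg_of_mul_nonneg_right this hfx
      linarith
    have h3 : f x ^ 2 * (R ^ 2 - ‖x - p‖ ^ 2) ^ 2 ≤ f x * (48 * R ^ 2) := by
      have a1 := mul_le_mul_of_nonneg_right h2 (sq_nonneg (R ^ 2 - ‖x - p‖ ^ 2))
      have a2 := mul_pos hfx hφ
      push_cast at hsum
      nlinarith
    have h4 := mul_lt_mul_of_pos_left hbig hfx
    nlinarith
  by_contra hne
  have hp : 0 < f p := lt_of_le_of_ne (hpos p) (Ne.symm hne)
  have h := main (√(49 / f p)) (by positivity)
  rw [Real.sq_sqrt (by positivity), mul_div_cancel₀ _ hp.ne'] at h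
  norm_num at h
end

section
/- Fix a real number a > 0 and define V_a : EuclideanSpace ℝ (Fin 4) → ℝ by V_a(x) = 32a / (32 − a²·‖x‖²). Then for every x with ‖x‖ < 4√2/a, the Laplacian of V_a at x equals (1/4)·V_a(x)³. -/
open scoped BigOperators

/-- The radial barrier `V_a(x) = 32a / (32 - a²‖x‖²)` on Euclidean `ℝ⁴`
satisfies `Δ V_a = (1/4) V_a³` on the ball `‖x‖ < 4√2 / a`. -/
theorem laplacian_radial_barrier (a : ℝ) (ha : 0 < a) :
    ∀ x : EuclideanSpace ℝ (Fin 4), ‖x‖ < 4 * Real.sqrt 2 / a →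
      laplacian (fun y : EuclideanSpace ℝ (Fin 4) =>
          32 * a / (32 - a ^ 2 * ‖y‖ ^ 2)) x
        = (1 / 4) * (32 * a / (32 - a ^ 2 * ‖x‖ ^ 2)) ^ 3 := by
  intro x hx
  have hcont : Continuous (fun y : EuclideanSpace ℝ (Fin 4) => 32 - a ^ 2 * ‖y‖ ^ 2) := by
    fun_prop
  have hpos : 0 < 32 - a ^ 2 * ‖x‖ ^ 2 := by
    rw [lt_div_iff₀ ha] at hx
    have h2 : Real.sqrt 2 ^ 2 = 2 := Real.sq_sqrt (by norm_num)
    have h3 : (‖x‖ * a) ^ 2 < (4 * Real.sqrt 2) ^ 2 := by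
      apply pow_lt_pow_left₀ hx (by positivity) (by norm_num)
    nlinarith
  have hN : ∀ y : EuclideanSpace ℝ (Fin 4),
      HasFDerivAt (fun y : EuclideanSpace ℝ (Fin 4) => 32 - a ^ 2 * ‖y‖ ^ 2)
        ((-(2 * a ^ 2)) • innerSL ℝ y) y := by
    intro y
    have h := (((hasStrictFDerivAt_norm_sq y).hasFDerivAt.const_mul (a ^ 2)).const_sub 32)
    refine h.congr_fderiv ?_
    ext v
    simp
    ring
  have hev : fderiv ℝ (fun y : EuclideanSpace ℝ (Fin 4) => 32 * a / (32 - a ^ 2 * ‖y‖ ^ 2))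
      =ᶠ[nhds x] fun y => (64 * a ^ 3 * ((32 - a ^ 2 * ‖y‖ ^ 2) ^ 2)⁻¹) • innerSL ℝ y := by
    filter_upwards [hcont.continuousAt.eventually (lt_mem_nhds hpos)] with y hy
    have h := ((hasDerivAt_inv hy.ne').comp_hasFDerivAt y (hN y)).const_mul (32 * a)
    have h' := h.fderiv
    simp only [div_eq_mul_inv]
    refine h'.trans ?_
    ext v
    simp
    ring
  have h2 : HasFDerivAt (fun y : EuclideanSpace ℝ (Fin 4) =>
      64 * a ^ 3 * ((32 - a ^ 2 * ‖y‖ ^ 2) ^ 2)⁻¹)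
      ((256 * a ^ 5 / (32 - a ^ 2 * ‖x‖ ^ 2) ^ 3) • innerSL ℝ x) x := by
    have h := ((hasDerivAt_inv (pow_ne_zero 2 hpos.ne')).comp_hasFDerivAt x
      ((hN x).pow 2)).const_mul (64 * a ^ 3)
    refine h.congr_fderiv ?_
    ext v
    simp
    field_simp
    ring
  have h3 := h2.smul (innerSL ℝ (E := EuclideanSpace ℝ (Fin 4))).hasFDerivAt (x := x)
  have h4 := (h3.congr_of_eventuallyEq hev).fderiv
  unfold laplacian
  have hsum := (stdOrthonormalBasis ℝ (EuclideanSpace ℝ (Fin 4))).sum_sq_inner_left x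
  have key : ∀ i, iteratedFDeriv ℝ 2 (fun y : EuclideanSpace ℝ (Fin 4) =>
      32 * a / (32 - a ^ 2 * ‖y‖ ^ 2)) x
      ![(stdOrthonormalBasis ℝ (EuclideanSpace ℝ (Fin 4))) i,
        (stdOrthonormalBasis ℝ (EuclideanSpace ℝ (Fin 4))) i]
      = 64 * a ^ 3 * ((32 - a ^ 2 * ‖x‖ ^ 2) ^ 2)⁻¹ +
        (256 * a ^ 5 / (32 - a ^ 2 * ‖x‖ ^ 2) ^ 3) *
          inner ℝ x ((stdOrthonormalBasis ℝ (EuclideanSpace ℝ (Fin 4))) i) ^ 2 := by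
    intro i
    rw [iteratedFDeriv_two_apply, h4]
    have h1 : inner ℝ ((stdOrthonormalBasis ℝ (EuclideanSpace ℝ (Fin 4))) i)
        ((stdOrthonormalBasis ℝ (EuclideanSpace ℝ (Fin 4))) i) = (1 : ℝ) := by
      rw [real_inner_self_eq_norm_sq]
      simp
    generalize (stdOrthonormalBasis ℝ (EuclideanSpace ℝ (Fin 4))) i = u at *
    change (64 * a ^ 3 * ((32 - a ^ 2 * ‖x‖ ^ 2) ^ 2)⁻¹) * inner ℝ u u +
      ((256 * a ^ 5 / (32 - a ^ 2 * ‖x‖ ^ 2) ^ 3) * inner ℝ x u) * inner ℝ x u = _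
    rw [h1]
    ring
  simp only [key]
  rw [Finset.sum_add_distrib, Finset.sum_const, ← Finset.mul_sum, hsum]
  simp
  field_simp
  ring
end
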